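/- arXiv:1903.00708 — 3 statements merged into one kernel-verified Lean document; each statement's English description precedes it below -/
import Mathlib

section
/- Let X : Ω → ℝ^p and Y : Ω → ℝ^q be random vectors on a probability space, and let μ be a measure on ℝ^p × ℝ^q that is absolutely continuous with respect to Lebesgue measure with a density that is positive Lebesgue-almost everywhere. Define the distance covariance (as a Lebesgue integral with values in [0,∞]) by T(X,Y;μ) = ∫_{ℝ^p×ℝ^q} |φ_{X,Y}(s,t) − φ_X(s)φ_Y(t)|² μ(ds,dt). Then T(X,Y;μ) = 0 if and only if X and Y are independent. -/
open MeasureTheory ProbabilityTheory Complex ENNReal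

/-- The characteristic function of a random vector `X : Ω → ℝ^p`. -/
noncomputable def charFn {Ω : Type*} [MeasureSpace Ω] {p : ℕ}
    (X : Ω → EuclideanSpace ℝ (Fin p)) (s : EuclideanSpace ℝ (Fin p)) : ℂ :=
  ∫ ω, Complex.exp (Complex.I * ((inner ℝ s (X ω) : ℝ) : ℂ)) ∂(ℙ : Measure Ω)

/-- The joint characteristic function of a pair of random vectors. -/
noncomputable def jointCharFn {Ω : Type*} [MeasureSpace Ω] {p q : ℕ}
    (X : Ω → EuclideanSpace ℝ (Fin p)) (Y : Ω → EuclideanSpace ℝ (Fin q))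
    (s : EuclideanSpace ℝ (Fin p)) (t : EuclideanSpace ℝ (Fin q)) : ℂ :=
  ∫ ω, Complex.exp (Complex.I * (((inner ℝ s (X ω) : ℝ) + (inner ℝ t (Y ω) : ℝ) : ℝ) : ℂ))
    ∂(ℙ : Measure Ω)

/-- The distance covariance of `X` and `Y` with respect to the weight measure `μ`,
taken as a Lebesgue integral with values in `[0,∞]`. -/
noncomputable def distCov {Ω : Type*} [MeasureSpace Ω] {p q : ℕ}
    (X : Ω → EuclideanSpace ℝ (Fin p)) (Y : Ω → EuclideanSpace ℝ (Fin q))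
    (μ : Measure (EuclideanSpace ℝ (Fin p) × EuclideanSpace ℝ (Fin q))) : ℝ≥0∞ :=
  ∫⁻ st, ENNReal.ofReal
    (‖jointCharFn X Y st.1 st.2 - charFn X st.1 * charFn Y st.2‖ ^ 2) ∂μ

/-!
Independence of `X` and `Y` means that the characteristic function of the pair is the product
`φ_X φ_Y` everywhere, while `T(X, Y; μ) = 0` only says that the two agree `μ`-almost everywhere.
Both sides are continuous, so the two conditions coincide as soon as `μ` charges every nonempty
open set. Lebesgue measure does, and it is absolutely continuous with respect to `μ` when the
density of `μ` is positive almost everywhere, so `μ` inherits the property.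
-/

lemma lintegral_ofReal_norm_sub_pow_eq_zero_iff {α E : Type*} [TopologicalSpace α]
    [MeasurableSpace α] [OpensMeasurableSpace α] [NormedAddCommGroup E] {μ : Measure α}
    [μ.IsOpenPosMeasure] {f g : α → E} (hf : Continuous f) (hg : Continuous g)
    {n : ℕ} (hn : n ≠ 0) :
    ∫⁻ a, ENNReal.ofReal (‖f a - g a‖ ^ n) ∂μ = 0 ↔ f = g := by
  have hcont : Continuous fun a ↦ ENNReal.ofReal (‖f a - g a‖ ^ n) :=
    ENNReal.continuous_ofReal.comp (by fun_prop)
  have hpow (a : α) : ENNReal.ofReal (‖f a - g a‖ ^ n) = 0 ↔ f a = g a := by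
    rw [ENNReal.ofReal_pow (norm_nonneg _), pow_eq_zero_iff hn, ENNReal.ofReal_eq_zero,
      norm_le_zero_iff, sub_eq_zero]
  rw [lintegral_eq_zero_iff hcont.measurable, hcont.ae_eq_iff_eq μ continuous_zero]
  simp only [funext_iff, Pi.zero_apply, hpow]

section CharFn

variable {Ω : Type*} [MeasureSpace Ω] {p q : ℕ}
  {X : Ω → EuclideanSpace ℝ (Fin p)} {Y : Ω → EuclideanSpace ℝ (Fin q)}

lemma charFn_eq_charFun_map (hX : AEMeasurable X ℙ) (s : EuclideanSpace ℝ (Fin p)) :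
    charFn X s = charFun (Measure.map X ℙ) s := by
  rw [charFun_apply, integral_map hX (by fun_prop), charFn]
  simp only [mul_comm I, real_inner_comm]

lemma jointCharFn_eq_charFun_map_toLp (hX : AEMeasurable X ℙ) (hY : AEMeasurable Y ℙ)
    (s : EuclideanSpace ℝ (Fin p)) (t : EuclideanSpace ℝ (Fin q)) :
    jointCharFn X Y s t =
      charFun (Measure.map (fun ω ↦ WithLp.toLp 2 (X ω, Y ω)) ℙ) (WithLp.toLp 2 (s, t)) := by
  rw [charFun_apply, integral_map (by fun_prop) (by fun_prop), jointCharFn]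
  simp only [mul_comm I, WithLp.prod_inner_apply, real_inner_comm]

variable [IsFiniteMeasure (ℙ : Measure Ω)]

lemma continuous_charFn (hX : AEMeasurable X ℙ) : Continuous (charFn X) := by
  simpa only [funext (charFn_eq_charFun_map hX)] using continuous_charFun

lemma continuous_jointCharFn (hX : AEMeasurable X ℙ) (hY : AEMeasurable Y ℙ) :
    Continuous fun st : EuclideanSpace ℝ (Fin p) × EuclideanSpace ℝ (Fin q) ↦
      jointCharFn X Y st.1 st.2 := by
  simp only [jointCharFn_eq_charFun_map_toLp hX hY]
  exact continuous_charFun.comp (by fun_prop)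

lemma indepFun_iff_jointCharFn_eq_mul (hX : AEMeasurable X ℙ) (hY : AEMeasurable Y ℙ) :
    IndepFun X Y ℙ ↔ ∀ s t, jointCharFn X Y s t = charFn X s * charFn Y t := by
  simp only [indepFun_iff_charFun_prod hX hY, jointCharFn_eq_charFun_map_toLp hX hY,
    charFn_eq_charFun_map hX, charFn_eq_charFun_map hY]
  exact ⟨fun h s t ↦ h (WithLp.toLp 2 (s, t)), fun h st ↦ h st.fst st.snd⟩

end CharFn

theorem distCov_eq_zero_iff_indepFun_general
    {Ω : Type*} [MeasureSpace Ω] [IsFiniteMeasure (ℙ : Measure Ω)]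
    {p q : ℕ} {X : Ω → EuclideanSpace ℝ (Fin p)} {Y : Ω → EuclideanSpace ℝ (Fin q)}
    (hX : AEMeasurable X ℙ) (hY : AEMeasurable Y ℙ)
    (μ : Measure (EuclideanSpace ℝ (Fin p) × EuclideanSpace ℝ (Fin q)))
    [μ.IsOpenPosMeasure] :
    distCov X Y μ = 0 ↔ IndepFun X Y ℙ := by
  have hmul : Continuous fun st : EuclideanSpace ℝ (Fin p) × EuclideanSpace ℝ (Fin q) ↦
      charFn X st.1 * charFn Y st.2 :=
    ((continuous_charFn hX).comp continuous_fst).mul ((continuous_charFn hY).comp continuous_snd)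
  rw [distCov, lintegral_ofReal_norm_sub_pow_eq_zero_iff (continuous_jointCharFn hX hY) hmul
    two_ne_zero, indepFun_iff_jointCharFn_eq_mul hX hY, funext_iff, Prod.forall]

/-- If the weight measure `μ` has an a.e. positive density with respect to Lebesgue
measure, then the distance covariance vanishes if and only if `X` and `Y` are
independent. -/
theorem distCov_eq_zero_iff_indepFun
    {Ω : Type*} [MeasureSpace Ω] [IsProbabilityMeasure (ℙ : Measure Ω)]
    {p q : ℕ} (X : Ω → EuclideanSpace ℝ (Fin p)) (Y : Ω → EuclideanSpace ℝ (Fin q))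
    (hX : Measurable X) (hY : Measurable Y)
    (μ : Measure (EuclideanSpace ℝ (Fin p) × EuclideanSpace ℝ (Fin q)))
    (f : EuclideanSpace ℝ (Fin p) × EuclideanSpace ℝ (Fin q) → ℝ≥0∞)
    (hf : Measurable f)
    (hμ : μ = (volume : Measure (EuclideanSpace ℝ (Fin p) × EuclideanSpace ℝ (Fin q))).withDensity f)
    (hfpos : ∀ᵐ st ∂(volume : Measure (EuclideanSpace ℝ (Fin p) × EuclideanSpace ℝ (Fin q))),
      0 < f st) :
    distCov X Y μ = 0 ↔ IndepFun X Y ℙ := by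
  have : μ.IsOpenPosMeasure := hμ ▸ (withDensity_absolutelyContinuous' hf.aemeasurable
    (hfpos.mono fun _ ↦ ne_of_gt)).isOpenPosMeasure
  exact distCov_eq_zero_iff_indepFun_general hX.aemeasurable hY.aemeasurable μ
end

section
/- Let α ∈ (0,2], let X : Ω → ℝ^p and Y : Ω → ℝ^q be random vectors with E[|X|^α·|Y|^α + |X|^α + |Y|^α] < ∞, and let μ be a measure on ℝ^p × ℝ^q satisfying ∫_{ℝ^p×ℝ^q} (1 ∧ |s|^α)(1 ∧ |t|^α) μ(ds,dt) < ∞. Then the distance covariance T(X,Y;μ) = ∫_{ℝ^p×ℝ^q} |φ_{X,Y}(s,t) − φ_X(s)φ_Y(t)|² μ(ds,dt) is finite. -/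
open MeasureTheory ProbabilityTheory Complex ENNReal

/-!
With `U = exp(i⟨s,X⟩)` and `V = exp(i⟨t,Y⟩)`, the integrand of the distance covariance is the
squared modulus of the complex covariance `E[UV] - E[U] E[V]`. By Cauchy–Schwarz it is at most
the product of the variances of `U` and `V`, and the variance of `U` is at most `E|U - 1|²`.
Since `|exp(iθ) - 1|² ≤ 4 (1 ∧ |θ|)² ≤ 4 (1 ∧ |θ|^α)`, the latter is at most
`4 (1 ∧ |s|^α)(1 + E|X|^α)`, and likewise for `V`. The product of the two bounds is
`μ`-integrable.
-/

lemma integrable_and_integrable_of_lintegral_mul_add_add_lt_top {Ω : Type*}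
    {mΩ : MeasurableSpace Ω} {P : Measure Ω} {f g : Ω → ℝ} (hf : AEStronglyMeasurable f P)
    (hg : AEStronglyMeasurable g P) (hf₀ : ∀ ω, 0 ≤ f ω) (hg₀ : ∀ ω, 0 ≤ g ω)
    (hfg : ∫⁻ ω, ENNReal.ofReal (f ω * g ω + f ω + g ω) ∂P < ∞) :
    Integrable f P ∧ Integrable g P := by
  have hfg₀ (ω : Ω) : 0 ≤ f ω * g ω := mul_nonneg (hf₀ ω) (hg₀ ω)
  have hsum : Integrable (fun ω ↦ f ω * g ω + f ω + g ω) P :=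
    ⟨((hf.mul hg).add hf).add hg, (hasFiniteIntegral_iff_ofReal
      (.of_forall fun ω ↦ add_nonneg (add_nonneg (hfg₀ ω) (hf₀ ω)) (hg₀ ω))).2 hfg⟩
  constructor
  · refine hsum.mono' hf (.of_forall fun ω ↦ ?_)
    rw [Real.norm_of_nonneg (hf₀ ω)]
    linarith [hfg₀ ω, hg₀ ω]
  · refine hsum.mono' hg (.of_forall fun ω ↦ ?_)
    rw [Real.norm_of_nonneg (hg₀ ω)]
    linarith [hfg₀ ω, hf₀ ω]

section Covariance

variable {Ω 𝕜 H : Type*} {mΩ : MeasurableSpace Ω} {P : Measure Ω} [RCLike 𝕜]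

lemma norm_integral_mul_sq_le {f g : Ω → 𝕜} (hf : MemLp f 2 P) (hg : MemLp g 2 P) :
    ‖∫ ω, f ω * g ω ∂P‖ ^ 2 ≤ (∫ ω, ‖f ω‖ ^ 2 ∂P) * ∫ ω, ‖g ω‖ ^ 2 ∂P := by
  have holder : ∫ ω, ‖f ω‖ * ‖g ω‖ ∂P ≤ √(∫ ω, ‖f ω‖ ^ 2 ∂P) * √(∫ ω, ‖g ω‖ ^ 2 ∂P) := by
    simpa only [Real.rpow_two, ← Real.sqrt_eq_rpow] using
      integral_mul_norm_le_Lp_mul_Lq Real.HolderConjugate.two_two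
        (by simpa using hf) (by simpa using hg)
  calc ‖∫ ω, f ω * g ω ∂P‖ ^ 2
      ≤ (∫ ω, ‖f ω‖ * ‖g ω‖ ∂P) ^ 2 := by
        gcongr
        simpa only [norm_mul] using norm_integral_le_integral_norm (μ := P) fun ω ↦ f ω * g ω
    _ ≤ (√(∫ ω, ‖f ω‖ ^ 2 ∂P) * √(∫ ω, ‖g ω‖ ^ 2 ∂P)) ^ 2 := by gcongr
    _ = (∫ ω, ‖f ω‖ ^ 2 ∂P) * ∫ ω, ‖g ω‖ ^ 2 ∂P := by
        rw [mul_pow, Real.sq_sqrt (by positivity), Real.sq_sqrt (by positivity)]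

variable [IsProbabilityMeasure P]

lemma integral_sub_integral_mul_sub_integral {f g : Ω → 𝕜} (hf : MemLp f 2 P)
    (hg : MemLp g 2 P) :
    ∫ ω, (f ω - P[f]) * (g ω - P[g]) ∂P = ∫ ω, f ω * g ω ∂P - P[f] * P[g] := by
  have hf₁ : Integrable f P := hf.integrable one_le_two
  have hg₁ : Integrable g P := hg.integrable one_le_two
  have hfg : Integrable (fun ω ↦ f ω * g ω) P := hf.integrable_mul hg
  simp_rw [sub_mul, mul_sub]
  rw [integral_sub (by fun_prop) (by fun_prop), integral_sub hfg (by fun_prop),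
    integral_sub (by fun_prop) (integrable_const _), integral_mul_const, integral_const_mul,
    integral_const, probReal_univ, one_smul, sub_self, sub_zero]

lemma integral_norm_sub_integral_sq_le [NormedAddCommGroup H] [InnerProductSpace 𝕜 H]
    [NormedSpace ℝ H] [CompleteSpace H] {f : Ω → H} (hf : MemLp f 2 P) (a : H) :
    ∫ ω, ‖f ω - P[f]‖ ^ 2 ∂P ≤ ∫ ω, ‖f ω - a‖ ^ 2 ∂P := by
  set m := P[f]
  have hfm : MemLp (fun ω ↦ f ω - m) 2 P := hf.sub (memLp_const m)
  have hinner : Integrable (fun ω ↦ inner 𝕜 (m - a) (f ω - m)) P :=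
    (hfm.integrable one_le_two).const_inner (m - a)
  have orthogonality : ∫ ω, RCLike.re (inner 𝕜 (m - a) (f ω - m)) ∂P = 0 := by
    rw [integral_re hinner, integral_inner (hfm.integrable one_le_two),
      integral_sub (hf.integrable one_le_two) (integrable_const m)]
    simp [m]
  have expand (ω : Ω) : ‖f ω - a‖ ^ 2 =
      ‖m - a‖ ^ 2 + 2 * RCLike.re (inner 𝕜 (m - a) (f ω - m)) + ‖f ω - m‖ ^ 2 := by
    rw [← norm_add_sq, sub_add_sub_comm, add_comm m, add_sub_add_right_eq_sub]
  have pythagoras : ∫ ω, ‖f ω - a‖ ^ 2 ∂P = ‖m - a‖ ^ 2 + ∫ ω, ‖f ω - m‖ ^ 2 ∂P := by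
    have hcross : Integrable (fun ω ↦ 2 * RCLike.re (inner 𝕜 (m - a) (f ω - m))) P :=
      hinner.re.const_mul 2
    simp_rw [expand]
    rw [integral_add (by fun_prop) (hfm.integrable_norm_pow two_ne_zero),
      integral_add (integrable_const _) hcross, integral_const_mul, orthogonality,
      integral_const, probReal_univ, one_smul, mul_zero, add_zero]
  rw [pythagoras]
  exact le_add_of_nonneg_left (sq_nonneg _)

lemma norm_integral_mul_sub_integral_mul_integral_sq_le {f g : Ω → 𝕜} (hf : MemLp f 2 P)
    (hg : MemLp g 2 P) (a b : 𝕜) :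
    ‖∫ ω, f ω * g ω ∂P - P[f] * P[g]‖ ^ 2 ≤
      (∫ ω, ‖f ω - a‖ ^ 2 ∂P) * ∫ ω, ‖g ω - b‖ ^ 2 ∂P := by
  rw [← integral_sub_integral_mul_sub_integral hf hg]
  calc ‖∫ ω, (f ω - P[f]) * (g ω - P[g]) ∂P‖ ^ 2
      ≤ (∫ ω, ‖f ω - P[f]‖ ^ 2 ∂P) * ∫ ω, ‖g ω - P[g]‖ ^ 2 ∂P :=
        norm_integral_mul_sq_le (hf.sub (memLp_const _)) (hg.sub (memLp_const _))
    _ ≤ (∫ ω, ‖f ω - a‖ ^ 2 ∂P) * ∫ ω, ‖g ω - b‖ ^ 2 ∂P := by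
        gcongr ?_ * ?_
        · exact integral_norm_sub_integral_sq_le (𝕜 := 𝕜) hf a
        · exact integral_norm_sub_integral_sq_le (𝕜 := 𝕜) hg b

end Covariance

section Truncation

lemma min_one_mul_le {a b : ℝ} (ha : 0 ≤ a) (hb : 0 ≤ b) :
    min 1 (a * b) ≤ min 1 a * (1 + b) := by
  rcases le_total 1 a with h | h
  · rw [min_eq_left h, one_mul]
    exact (min_le_left _ _).trans (le_add_of_nonneg_right hb)
  · rw [min_eq_right h, mul_one_add]
    exact (min_le_right _ _).trans (le_add_of_nonneg_left ha)

lemma min_one_sq_le_min_one_rpow {x α : ℝ} (hx : 0 ≤ x) (hα : α ∈ Set.Icc 0 2) :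
    min 1 x ^ 2 ≤ min 1 (x ^ α) := by
  have hmin : 0 ≤ min 1 x := le_min zero_le_one hx
  have hsq : min 1 x ^ 2 ≤ min 1 x ^ α := by
    rw [← Real.rpow_two]
    exact Real.rpow_le_rpow_of_exponent_ge' hmin (min_le_left _ _) hα.1 hα.2
  refine le_min (pow_le_one₀ hmin (min_le_left _ _)) (hsq.trans ?_)
  exact Real.rpow_le_rpow hmin (min_le_right _ _) hα.1

end Truncation

section CharacteristicFunction

open BoundedContinuousFunction (innerProbChar innerProbChar_apply)

section InnerProbChar

variable {E : Type*} [SeminormedAddCommGroup E] [InnerProductSpace ℝ E]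

lemma norm_innerProbChar (s x : E) : ‖innerProbChar s x‖ = 1 := by
  rw [innerProbChar_apply, norm_exp_ofReal_mul_I]

lemma norm_innerProbChar_sub_one_le (s x : E) :
    ‖innerProbChar s x - 1‖ ≤ 2 * min 1 (‖s‖ * ‖x‖) := by
  have hbdd : ‖innerProbChar s x - 1‖ ≤ 2 := by
    refine (norm_sub_le _ _).trans_eq ?_
    rw [norm_innerProbChar, norm_one, one_add_one_eq_two]
  have hlip : ‖innerProbChar s x - 1‖ ≤ ‖s‖ * ‖x‖ := by
    rw [innerProbChar_apply, mul_comm, real_inner_comm]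
    exact Real.norm_exp_I_mul_ofReal_sub_one_le.trans (norm_inner_le_norm s x)
  rw [mul_min_of_nonneg _ _ zero_le_two, mul_one]
  exact le_min hbdd (hlip.trans (le_mul_of_one_le_left (by positivity) one_le_two))

lemma norm_innerProbChar_sub_one_sq_le {α : ℝ} (hα : α ∈ Set.Icc 0 2) (s x : E) :
    ‖innerProbChar s x - 1‖ ^ 2 ≤ 4 * min 1 (‖s‖ ^ α) * (1 + ‖x‖ ^ α) :=
  calc ‖innerProbChar s x - 1‖ ^ 2
      ≤ (2 * min 1 (‖s‖ * ‖x‖)) ^ 2 := by gcongr; exact norm_innerProbChar_sub_one_le s x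
    _ = 4 * min 1 (‖s‖ * ‖x‖) ^ 2 := by ring
    _ ≤ 4 * min 1 (‖s‖ ^ α * ‖x‖ ^ α) := by
        rw [← Real.mul_rpow (norm_nonneg s) (norm_nonneg x)]
        gcongr
        exact min_one_sq_le_min_one_rpow (by positivity) hα
    _ ≤ 4 * min 1 (‖s‖ ^ α) * (1 + ‖x‖ ^ α) := by
        rw [mul_assoc]
        gcongr
        exact min_one_mul_le (by positivity) (by positivity)

lemma memLp_innerProbChar_comp [MeasurableSpace E] [OpensMeasurableSpace E] {Ω : Type*}
    [MeasurableSpace Ω] {P : Measure Ω} [IsFiniteMeasure P] {X : Ω → E}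
    (hX : AEMeasurable X P) (s : E) (r : ℝ≥0∞) :
    MemLp (fun ω ↦ innerProbChar s (X ω)) r P :=
  .of_bound ((innerProbChar s).continuous.measurable.comp_aemeasurable hX).aestronglyMeasurable 1
    (.of_forall fun ω ↦ (norm_innerProbChar s (X ω)).le)

end InnerProbChar

section MeasureSpace

variable {Ω : Type*} [MeasureSpace Ω] {p q : ℕ}

lemma charFn_eq_integral_innerProbChar (X : Ω → EuclideanSpace ℝ (Fin p))
    (s : EuclideanSpace ℝ (Fin p)) : charFn X s = ∫ ω, innerProbChar s (X ω) := by
  simp only [charFn, innerProbChar_apply, real_inner_comm, mul_comm]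

lemma jointCharFn_eq_integral_innerProbChar_mul (X : Ω → EuclideanSpace ℝ (Fin p))
    (Y : Ω → EuclideanSpace ℝ (Fin q)) (s : EuclideanSpace ℝ (Fin p))
    (t : EuclideanSpace ℝ (Fin q)) :
    jointCharFn X Y s t = ∫ ω, innerProbChar s (X ω) * innerProbChar t (Y ω) := by
  simp only [jointCharFn, innerProbChar_apply, real_inner_comm, ← Complex.exp_add,
    Complex.ofReal_add, mul_add, mul_comm]

end MeasureSpace

section RandomVectors

variable {Ω E F : Type*} {mΩ : MeasurableSpace Ω} {P : Measure Ω} [IsProbabilityMeasure P]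
  [SeminormedAddCommGroup E] [InnerProductSpace ℝ E]
  [SeminormedAddCommGroup F] [InnerProductSpace ℝ F]

lemma integral_norm_innerProbChar_sub_one_sq_le {X : Ω → E} {α : ℝ} (hα : α ∈ Set.Icc 0 2)
    (hXα : Integrable (fun ω ↦ ‖X ω‖ ^ α) P) (s : E) :
    ∫ ω, ‖innerProbChar s (X ω) - 1‖ ^ 2 ∂P ≤
      4 * min 1 (‖s‖ ^ α) * (1 + ∫ ω, ‖X ω‖ ^ α ∂P) :=
  calc ∫ ω, ‖innerProbChar s (X ω) - 1‖ ^ 2 ∂P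
      ≤ ∫ ω, 4 * min 1 (‖s‖ ^ α) * (1 + ‖X ω‖ ^ α) ∂P :=
        integral_mono_of_nonneg (.of_forall fun _ ↦ by positivity)
          (((integrable_const 1).add hXα).const_mul _)
          (.of_forall fun ω ↦ norm_innerProbChar_sub_one_sq_le hα s (X ω))
    _ = 4 * min 1 (‖s‖ ^ α) * (1 + ∫ ω, ‖X ω‖ ^ α ∂P) := by
        rw [integral_const_mul, integral_add (integrable_const 1) hXα, integral_const,
          probReal_univ, one_smul]

variable [MeasurableSpace E] [OpensMeasurableSpace E] [MeasurableSpace F]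
  [OpensMeasurableSpace F] {X : Ω → E} {Y : Ω → F}

lemma norm_integral_innerProbChar_mul_sub_sq_le (hX : AEMeasurable X P) (hY : AEMeasurable Y P)
    {α β : ℝ} (hα : α ∈ Set.Icc 0 2) (hβ : β ∈ Set.Icc 0 2)
    (hXα : Integrable (fun ω ↦ ‖X ω‖ ^ α) P) (hYβ : Integrable (fun ω ↦ ‖Y ω‖ ^ β) P)
    (s : E) (t : F) :
    ‖∫ ω, innerProbChar s (X ω) * innerProbChar t (Y ω) ∂P -
        (∫ ω, innerProbChar s (X ω) ∂P) * ∫ ω, innerProbChar t (Y ω) ∂P‖ ^ 2 ≤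
      16 * ((1 + ∫ ω, ‖X ω‖ ^ α ∂P) * (1 + ∫ ω, ‖Y ω‖ ^ β ∂P)) *
        (min 1 (‖s‖ ^ α) * min 1 (‖t‖ ^ β)) :=
  calc _ ≤ (∫ ω, ‖innerProbChar s (X ω) - 1‖ ^ 2 ∂P) *
          ∫ ω, ‖innerProbChar t (Y ω) - 1‖ ^ 2 ∂P :=
        norm_integral_mul_sub_integral_mul_integral_sq_le (memLp_innerProbChar_comp hX s 2)
          (memLp_innerProbChar_comp hY t 2) 1 1
    _ ≤ (4 * min 1 (‖s‖ ^ α) * (1 + ∫ ω, ‖X ω‖ ^ α ∂P)) *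
          (4 * min 1 (‖t‖ ^ β) * (1 + ∫ ω, ‖Y ω‖ ^ β ∂P)) := by
        gcongr ?_ * ?_
        · exact integral_norm_innerProbChar_sub_one_sq_le hα hXα s
        · exact integral_norm_innerProbChar_sub_one_sq_le hβ hYβ t
    _ = _ := by ring

theorem distCov_lt_top_general (hX : AEMeasurable X P) (hY : AEMeasurable Y P)
    {α β : ℝ} (hα : α ∈ Set.Icc 0 2) (hβ : β ∈ Set.Icc 0 2)
    (hXα : Integrable (fun ω ↦ ‖X ω‖ ^ α) P) (hYβ : Integrable (fun ω ↦ ‖Y ω‖ ^ β) P)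
    {μ : Measure (E × F)}
    (hμ : ∫⁻ st, ENNReal.ofReal (min 1 (‖st.1‖ ^ α) * min 1 (‖st.2‖ ^ β)) ∂μ < ∞) :
    ∫⁻ st, ENNReal.ofReal
      (‖∫ ω, innerProbChar st.1 (X ω) * innerProbChar st.2 (Y ω) ∂P -
        (∫ ω, innerProbChar st.1 (X ω) ∂P) * ∫ ω, innerProbChar st.2 (Y ω) ∂P‖ ^ 2) ∂μ < ∞ := by
  set C : ℝ := 16 * ((1 + ∫ ω, ‖X ω‖ ^ α ∂P) * (1 + ∫ ω, ‖Y ω‖ ^ β ∂P))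
  have hC₀ : 0 ≤ C := by positivity
  calc _ ≤ ∫⁻ st, ENNReal.ofReal C *
          ENNReal.ofReal (min 1 (‖st.1‖ ^ α) * min 1 (‖st.2‖ ^ β)) ∂μ := by
        refine lintegral_mono fun st ↦ ?_
        rw [← ENNReal.ofReal_mul hC₀]
        exact ENNReal.ofReal_le_ofReal <|
          norm_integral_innerProbChar_mul_sub_sq_le hX hY hα hβ hXα hYβ st.1 st.2
    _ = ENNReal.ofReal C *
          ∫⁻ st, ENNReal.ofReal (min 1 (‖st.1‖ ^ α) * min 1 (‖st.2‖ ^ β)) ∂μ :=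
        lintegral_const_mul' _ _ ENNReal.ofReal_ne_top
    _ < ∞ := ENNReal.mul_lt_top ENNReal.ofReal_lt_top hμ

end RandomVectors

end CharacteristicFunction

/-- If `α ∈ (0,2]`, the moment `E[|X|^α |Y|^α + |X|^α + |Y|^α]` is finite and the
weight measure integrates `(1 ∧ |s|^α)(1 ∧ |t|^α)`, then the distance covariance is
finite. -/
theorem distCov_lt_top
    {Ω : Type*} [MeasureSpace Ω] [IsProbabilityMeasure (ℙ : Measure Ω)]
    {p q : ℕ} (X : Ω → EuclideanSpace ℝ (Fin p)) (Y : Ω → EuclideanSpace ℝ (Fin q))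
    (hX : Measurable X) (hY : Measurable Y)
    (α : ℝ) (hα : α ∈ Set.Ioc (0 : ℝ) 2)
    (hmom : (∫⁻ ω, ENNReal.ofReal
        (‖X ω‖ ^ α * ‖Y ω‖ ^ α + ‖X ω‖ ^ α + ‖Y ω‖ ^ α) ∂(ℙ : Measure Ω)) < ∞)
    (μ : Measure (EuclideanSpace ℝ (Fin p) × EuclideanSpace ℝ (Fin q)))
    (hμ : (∫⁻ st, ENNReal.ofReal
        (min 1 (‖st.1‖ ^ α) * min 1 (‖st.2‖ ^ α)) ∂μ) < ∞) :
    distCov X Y μ < ∞ := by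
  have hα₀ : 0 ≤ α := hα.1.le
  have hα₂ : α ∈ Set.Icc 0 2 := Set.Ioc_subset_Icc_self hα
  obtain ⟨hXα, hYα⟩ : Integrable (fun ω ↦ ‖X ω‖ ^ α) ℙ ∧ Integrable (fun ω ↦ ‖Y ω‖ ^ α) ℙ :=
    integrable_and_integrable_of_lintegral_mul_add_add_lt_top (by fun_prop) (by fun_prop)
      (fun _ ↦ by positivity) (fun _ ↦ by positivity) hmom
  simpa only [distCov, jointCharFn_eq_integral_innerProbChar_mul,
    charFn_eq_integral_innerProbChar] using
    distCov_lt_top_general hX.aemeasurable hY.aemeasurable hα₂ hα₂ hXα hYα hμ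
end

section
/- Let (Z_j)_{j≥1} be independent and identically distributed real-valued random variables with common characteristic function φ_Z(s) = E[exp(isZ_1)], and fix an integer h ≥ 1 and s, t ∈ ℝ. For n > h define C_n(s,t) = (1/n)∑_{j=1}^{n−h} e^{i(sZ_j + tZ_{j+h})} − ((1/n)∑_{j=1}^{n−h} e^{isZ_j})·((1/n)∑_{j=1}^{n−h} e^{itZ_{j+h}}). Then √n·C_n(s,t) − (1/√n)∑_{j=1}^{n−h} (e^{isZ_j} − φ_Z(s))·(e^{itZ_{j+h}} − φ_Z(t)) converges to 0 in probability as n → ∞. -/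
open MeasureTheory ProbabilityTheory Complex Finset Filter

/-!
Write `A` and `B` for the sums of the centred variables `e^{isZ_j} - φ_Z(s)` and
`e^{itZ_{j+h}} - φ_Z(t)`. Expanding, the difference in question is `n^{-1/2}` times a combination of
`h A / n`, `h B / n`, a bounded constant and `A B / n`. Pairwise independence makes the centred
variables orthogonal in `L²`, so `E|A|²` and `E|B|²` are `O(n)`; the combination is therefore
bounded in `L¹`, and the difference tends to `0` in `L¹`.
-/

section SampleCov

variable {ι K : Type*} [Field K]

/-- The sample covariance `n⁻¹ ∑ x_i y_i - (n⁻¹ ∑ x_i) (n⁻¹ ∑ y_i)` over a finite index set `S`,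
normalised by the sample size `n` and not by `#S`, since a sample of size `n` has only `n - h`
pairs at lag `h`. For `x_j = e^{isZ_j}` and `y_j = e^{itZ_{j+h}}` it is `C_n(s,t)`. -/
def sampleCov (n : ℕ) (S : Finset ι) (x y : ι → K) : K :=
  (n : K)⁻¹ * ∑ i ∈ S, x i * y i - ((n : K)⁻¹ * ∑ i ∈ S, x i) * ((n : K)⁻¹ * ∑ i ∈ S, y i)

lemma mul_sampleCov_sub_inv_mul_sum {r : K} {n : ℕ} (hr₀ : r ≠ 0) (hr : r ^ 2 = n)
    (S : Finset ι) (x y : ι → K) (p q : K) :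
    r * sampleCov n S x y - r⁻¹ * ∑ i ∈ S, (x i - p) * (y i - q) =
      r⁻¹ * (((n - #S) * (q * ∑ i ∈ S, (x i - p) + p * ∑ i ∈ S, (y i - q) + #S * (p * q)) -
        (∑ i ∈ S, (x i - p)) * ∑ i ∈ S, (y i - q)) / n) := by
  simp only [sampleCov, sub_mul, mul_sub, sum_sub_distrib, ← sum_mul, ← mul_sum, sum_const,
    nsmul_eq_mul, ← hr]
  field_simp
  ring

end SampleCov

lemma add_mul_div_le_mul_one_add_sq_div {a b p q c h n : ℝ} (hp : 0 ≤ p) (hq : 0 ≤ q) (hc : 0 ≤ c)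
    (hch : c ≤ h) (hn : 1 ≤ n) (ha : 0 ≤ a) (hb : 0 ≤ b) :
    (c * (q * a + p * b + n * (p * q)) + a * b) / n ≤
      (h * (p + q + p * q) + 1) * (1 + (a ^ 2 + b ^ 2) / n) := by
  have hh : 0 ≤ h := hc.trans hch
  set N := n + a ^ 2 + b ^ 2 with hN
  have haN : a ≤ N := by nlinarith [sq_nonneg (a - 1), sq_nonneg b]
  have hbN : b ≤ N := by nlinarith [sq_nonneg (b - 1), sq_nonneg a]
  have hnN : n ≤ N := by linarith [sq_nonneg a, sq_nonneg b]
  have habN : a * b ≤ N := by linarith [two_mul_le_add_sq a b, mul_nonneg ha hb]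
  rw [div_le_iff₀ (by positivity)]
  calc c * (q * a + p * b + n * (p * q)) + a * b
      ≤ h * (q * N + p * N + N * (p * q)) + N := by gcongr
    _ = (h * (p + q + p * q) + 1) * (1 + (a ^ 2 + b ^ 2) / n) * n := by
      field_simp
      rw [hN]
      ring

lemma norm_sqrt_mul_sampleCov_sub_le {ι 𝕜 : Type*} [RCLike 𝕜] {n h : ℕ} {S : Finset ι}
    (hn : n ≠ 0) (hS : #S ≤ n) (hh : n ≤ #S + h) (x y : ι → 𝕜) (p q : 𝕜) :
    ‖((√n : ℝ) : 𝕜) * sampleCov n S x y - ((√n : ℝ) : 𝕜)⁻¹ * ∑ i ∈ S, (x i - p) * (y i - q)‖ ≤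
      (√n)⁻¹ * ((h * (‖p‖ + ‖q‖ + ‖p‖ * ‖q‖) + 1) *
        (1 + (‖∑ i ∈ S, (x i - p)‖ ^ 2 + ‖∑ i ∈ S, (y i - q)‖ ^ 2) / n)) := by
  have hr : ((√n : ℝ) : 𝕜) ^ 2 = n := by
    rw [← RCLike.ofReal_pow, Real.sq_sqrt n.cast_nonneg, RCLike.ofReal_natCast]
  have hr₀ : ((√n : ℝ) : 𝕜) ≠ 0 := by
    simpa using hn
  have hn₁ : (1 : ℝ) ≤ n := mod_cast Nat.one_le_iff_ne_zero.2 hn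
  have hdefect : ((n - #S : ℕ) : ℝ) ≤ h := mod_cast (by lia)
  rw [mul_sampleCov_sub_inv_mul_sum hr₀ hr, ← Nat.cast_sub hS, norm_mul, norm_inv,
    RCLike.norm_ofReal, abs_of_nonneg (Real.sqrt_nonneg _), norm_div, RCLike.norm_natCast]
  set A := ∑ i ∈ S, (x i - p)
  set B := ∑ i ∈ S, (y i - q)
  have hlinear : ‖q * A + p * B + #S * (p * q)‖ ≤ ‖q‖ * ‖A‖ + ‖p‖ * ‖B‖ + n * (‖p‖ * ‖q‖) := by
    refine norm_add₃_le.trans ?_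
    simp only [norm_mul, RCLike.norm_natCast]
    gcongr
  have hnum : ‖((n - #S : ℕ) : 𝕜) * (q * A + p * B + #S * (p * q)) - A * B‖ ≤
      (n - #S : ℕ) * (‖q‖ * ‖A‖ + ‖p‖ * ‖B‖ + n * (‖p‖ * ‖q‖)) + ‖A‖ * ‖B‖ := by
    refine (norm_sub_le _ _).trans ?_
    rw [norm_mul, norm_mul A B, RCLike.norm_natCast]
    gcongr
  gcongr
  exact (div_le_div_of_nonneg_right hnum n.cast_nonneg).trans <|
    add_mul_div_le_mul_one_add_sq_div (norm_nonneg p) (norm_nonneg q) (Nat.cast_nonneg _) hdefect hn₁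
      (norm_nonneg A) (norm_nonneg B)

section SecondMoment

variable {Ω ι E : Type*} {mΩ : MeasurableSpace Ω} {μ : Measure Ω}
  [NormedAddCommGroup E] [InnerProductSpace ℝ E]

lemma integral_norm_sum_sq_of_pairwise_integral_inner_eq_zero {X : ι → Ω → E}
    (hX : ∀ i, MemLp (X i) 2 μ)
    (horth : Pairwise fun i j => ∫ ω, inner ℝ (X i ω) (X j ω) ∂μ = 0) (S : Finset ι) :
    ∫ ω, ‖∑ i ∈ S, X i ω‖ ^ 2 ∂μ = ∑ i ∈ S, ∫ ω, ‖X i ω‖ ^ 2 ∂μ := by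
  have hint (i j : ι) : Integrable (fun ω => inner ℝ (X i ω) (X j ω)) μ :=
    memLp_one_iff_integrable.1 ((innerSL ℝ).memLp_of_bilin 1 (hX i) (hX j))
  have hdiag {i : ι} (hi : i ∈ S) :
      ∑ j ∈ S, ∫ ω, inner ℝ (X i ω) (X j ω) ∂μ = ∫ ω, ‖X i ω‖ ^ 2 ∂μ := by
    rw [sum_eq_single_of_mem i hi fun j _ hj => horth hj.symm]
    simp only [real_inner_self_eq_norm_sq]
  calc ∫ ω, ‖∑ i ∈ S, X i ω‖ ^ 2 ∂μ
      = ∫ ω, ∑ i ∈ S, ∑ j ∈ S, inner ℝ (X i ω) (X j ω) ∂μ := by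
        simp only [← real_inner_self_eq_norm_sq, sum_inner]
        simp only [inner_sum]
    _ = ∑ i ∈ S, ∑ j ∈ S, ∫ ω, inner ℝ (X i ω) (X j ω) ∂μ := by
        rw [integral_finsetSum _ fun i _ => integrable_finsetSum _ fun j _ => hint i j]
        exact sum_congr rfl fun i _ => integral_finsetSum _ fun j _ => hint i j
    _ = ∑ i ∈ S, ∫ ω, ‖X i ω‖ ^ 2 ∂μ := sum_congr rfl fun i hi => hdiag hi

variable [CompleteSpace E] [MeasurableSpace E] [BorelSpace E]

lemma integral_inner_of_indepFun {X Y : Ω → E} (hXY : IndepFun X Y μ) (hX : Integrable X μ)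
    (hY : Integrable Y μ) :
    ∫ ω, inner ℝ (X ω) (Y ω) ∂μ = inner ℝ (∫ ω, X ω ∂μ) (∫ ω, Y ω ∂μ) :=
  hXY.integral_bilin hX hY (innerSL ℝ)

lemma integral_norm_sum_sub_integral_sq_of_identDistrib [IsProbabilityMeasure μ]
    {X : ι → Ω → E}
    (hindep : Pairwise fun i j => IndepFun (X i) (X j) μ)
    {X₀ : Ω → E} (hident : ∀ i, IdentDistrib (X i) X₀ μ μ) (hX₀ : MemLp X₀ 2 μ) (S : Finset ι) :
    ∫ ω, ‖∑ i ∈ S, (X i ω - ∫ ω', X₀ ω' ∂μ)‖ ^ 2 ∂μ =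
      #S * ∫ ω, ‖X₀ ω - ∫ ω', X₀ ω' ∂μ‖ ^ 2 ∂μ := by
  set m := ∫ ω', X₀ ω' ∂μ
  have hident_sub (i : ι) : IdentDistrib (fun ω => X i ω - m) (fun ω => X₀ ω - m) μ μ :=
    (hident i).comp (measurable_id.sub_const m)
  have hL2 (i : ι) : MemLp (fun ω => X i ω - m) 2 μ :=
    (hident_sub i).memLp_iff.2 (hX₀.sub (memLp_const m))
  have hmean (i : ι) : ∫ ω, (X i ω - m) ∂μ = 0 := by
    rw [(hident_sub i).integral_eq, integral_sub (hX₀.integrable one_le_two) (integrable_const m)]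
    simp [m]
  have horth : Pairwise fun i j => ∫ ω, inner ℝ (X i ω - m) (X j ω - m) ∂μ = 0 := by
    intro i j hij
    have hindep_sub : IndepFun (fun ω => X i ω - m) (fun ω => X j ω - m) μ :=
      (hindep hij).comp (measurable_id.sub_const m) (measurable_id.sub_const m)
    rw [integral_inner_of_indepFun hindep_sub ((hL2 i).integrable one_le_two)
      ((hL2 j).integrable one_le_two), hmean, inner_zero_left]
  have hvar (i : ι) : ∫ ω, ‖X i ω - m‖ ^ 2 ∂μ = ∫ ω, ‖X₀ ω - m‖ ^ 2 ∂μ :=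
    (hident_sub i).norm.sq.integral_eq
  rw [integral_norm_sum_sq_of_pairwise_integral_inner_eq_zero hL2 horth]
  simp only [hvar, sum_const, nsmul_eq_mul]

end SecondMoment

lemma eLpNorm_one_le_ofReal_integral {Ω E : Type*} {mΩ : MeasurableSpace Ω} {μ : Measure Ω}
    [NormedAddCommGroup E] {f : Ω → E} {g : Ω → ℝ} (hg : Integrable g μ)
    (hfg : ∀ ω, ‖f ω‖ ≤ g ω) : eLpNorm f 1 μ ≤ ENNReal.ofReal (∫ ω, g ω ∂μ) := by
  have hg₀ : 0 ≤ᵐ[μ] g := ae_of_all μ fun ω => (norm_nonneg _).trans (hfg ω)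
  rw [eLpNorm_one_eq_lintegral_enorm, ofReal_integral_eq_lintegral_ofReal hg hg₀]
  refine lintegral_mono fun ω => ?_
  rw [← ofReal_norm]
  exact ENNReal.ofReal_le_ofReal (hfg ω)

lemma eLpNorm_one_sqrt_mul_sampleCov_sub_le {Ω ι 𝕜 : Type*} {mΩ : MeasurableSpace Ω}
    {μ : Measure Ω} [IsProbabilityMeasure μ] [RCLike 𝕜] {n h : ℕ} {S : Finset ι}
    (hn : n ≠ 0) (hS : #S ≤ n) (hh : n ≤ #S + h) {X Y : ι → Ω → 𝕜} {p q : 𝕜} {v w : ℝ}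
    (hX : ∀ i, MemLp (X i) 2 μ) (hY : ∀ i, MemLp (Y i) 2 μ)
    (hv : ∫ ω, ‖∑ i ∈ S, (X i ω - p)‖ ^ 2 ∂μ ≤ n * v)
    (hw : ∫ ω, ‖∑ i ∈ S, (Y i ω - q)‖ ^ 2 ∂μ ≤ n * w) :
    eLpNorm (fun ω => ((√n : ℝ) : 𝕜) * sampleCov n S (X · ω) (Y · ω) -
        ((√n : ℝ) : 𝕜)⁻¹ * ∑ i ∈ S, (X i ω - p) * (Y i ω - q)) 1 μ ≤
      ENNReal.ofReal ((√n)⁻¹ * ((h * (‖p‖ + ‖q‖ + ‖p‖ * ‖q‖) + 1) * (1 + (v + w)))) := by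
  have hA : Integrable (fun ω => ‖∑ i ∈ S, (X i ω - p)‖ ^ 2) μ :=
    (memLp_finsetSum S fun i _ => (hX i).sub (memLp_const p)).integrable_norm_pow two_ne_zero
  have hB : Integrable (fun ω => ‖∑ i ∈ S, (Y i ω - q)‖ ^ 2) μ :=
    (memLp_finsetSum S fun i _ => (hY i).sub (memLp_const q)).integrable_norm_pow two_ne_zero
  let T (ω : Ω) : ℝ := (‖∑ i ∈ S, (X i ω - p)‖ ^ 2 + ‖∑ i ∈ S, (Y i ω - q)‖ ^ 2) / n
  have hT : Integrable T μ := (hA.add hB).div_const (n : ℝ)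
  have hT_le : ∫ ω, T ω ∂μ ≤ v + w := by
    rw [integral_div, integral_add hA hB, div_le_iff₀ (by positivity)]
    linarith
  have hmean : ∫ ω, (1 + T ω) ∂μ = 1 + ∫ ω, T ω ∂μ := by
    rw [integral_add (integrable_const 1) hT, integral_const, probReal_univ, one_smul]
  have hbound : Integrable
      (fun ω => (√n)⁻¹ * ((h * (‖p‖ + ‖q‖ + ‖p‖ * ‖q‖) + 1) * (1 + T ω))) μ :=
    (((integrable_const 1).add hT).const_mul _).const_mul _
  refine (eLpNorm_one_le_ofReal_integral hbound fun ω =>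
    norm_sqrt_mul_sampleCov_sub_le hn hS hh (X · ω) (Y · ω) p q).trans ?_
  rw [integral_const_mul, integral_const_mul, hmean]
  gcongr

lemma tendsto_ofReal_inv_sqrt_mul_atTop (C : ℝ) :
    Tendsto (fun n : ℕ => ENNReal.ofReal ((√n)⁻¹ * C)) atTop (nhds 0) := by
  have hsqrt : Tendsto (fun n : ℕ => (√n)⁻¹) atTop (nhds 0) :=
    tendsto_inv_atTop_zero.comp (Real.tendsto_sqrt_atTop.comp tendsto_natCast_atTop_atTop)
  simpa using ENNReal.tendsto_ofReal (hsqrt.mul_const C)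

lemma memLp_exp_I_mul_ofReal {Ω : Type*} {mΩ : MeasurableSpace Ω} {μ : Measure Ω}
    [IsFiniteMeasure μ] {X : Ω → ℝ} (hX : AEMeasurable X μ) (p : ENNReal) :
    MemLp (fun ω => exp (I * (X ω : ℂ))) p μ :=
  MemLp.of_bound (by fun_prop) 1 <| ae_of_all μ fun ω => by
    rw [mul_comm, norm_exp_ofReal_mul_I]

theorem sqrt_n_Cn_approx_general {Ω 𝓧 𝕜 : Type*} {mΩ : MeasurableSpace Ω} {μ : Measure Ω}
    [IsProbabilityMeasure μ] [MeasurableSpace 𝓧] [RCLike 𝕜] {Z : ℕ → Ω → 𝓧}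
    (hindep : Pairwise fun i j => IndepFun (Z i) (Z j) μ)
    (hident : ∀ j, IdentDistrib (Z j) (Z 1) μ μ) {f g : 𝓧 → 𝕜}
    (hf : Measurable f) (hg : Measurable g)
    (hfZ : MemLp (fun ω => f (Z 1 ω)) 2 μ) (hgZ : MemLp (fun ω => g (Z 1 ω)) 2 μ) (h : ℕ) :
    Tendsto (fun n : ℕ => eLpNorm (fun ω =>
        ((√n : ℝ) : 𝕜) *
          sampleCov n (Icc 1 (n - h)) (fun j => f (Z j ω)) (fun j => g (Z (j + h) ω)) -
        ((√n : ℝ) : 𝕜)⁻¹ * ∑ j ∈ Icc 1 (n - h),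
          (f (Z j ω) - ∫ ω', f (Z 1 ω') ∂μ) * (g (Z (j + h) ω) - ∫ ω', g (Z 1 ω') ∂μ)) 1 μ)
      atTop (nhds 0) := by
  set p := ∫ ω, f (Z 1 ω) ∂μ
  set q := ∫ ω, g (Z 1 ω) ∂μ
  set v := ∫ ω, ‖f (Z 1 ω) - p‖ ^ 2 ∂μ
  set w := ∫ ω, ‖g (Z 1 ω) - q‖ ^ 2 ∂μ
  have hcard (n : ℕ) : #(Icc 1 (n - h)) = n - h := by simp
  have hidentX (j : ℕ) := (hident j).comp hf
  have hidentY (j : ℕ) := (hident (j + h)).comp hg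
  have hcard_mul_le (n : ℕ) {c : ℝ} (hc : 0 ≤ c) : #(Icc 1 (n - h)) * c ≤ n * c :=
    mul_le_mul_of_nonneg_right (mod_cast (hcard n).trans_le (n.sub_le h)) hc
  have hX (n : ℕ) : ∫ ω, ‖∑ j ∈ Icc 1 (n - h), (f (Z j ω) - p)‖ ^ 2 ∂μ ≤ n * v :=
    (integral_norm_sum_sub_integral_sq_of_identDistrib
      (fun i j hij => (hindep hij).comp hf hf) hidentX hfZ _).trans_le
      (hcard_mul_le n (integral_nonneg fun ω => sq_nonneg _))
  have hY (n : ℕ) : ∫ ω, ‖∑ j ∈ Icc 1 (n - h), (g (Z (j + h) ω) - q)‖ ^ 2 ∂μ ≤ n * w :=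
    (integral_norm_sum_sub_integral_sq_of_identDistrib
      (fun i j hij => (hindep ((add_left_injective h).ne hij)).comp hg hg) hidentY hgZ _).trans_le
      (hcard_mul_le n (integral_nonneg fun ω => sq_nonneg _))
  have hlim := tendsto_ofReal_inv_sqrt_mul_atTop
    ((h * (‖p‖ + ‖q‖ + ‖p‖ * ‖q‖) + 1) * (1 + (v + w)))
  refine tendsto_of_tendsto_of_tendsto_of_le_of_le' tendsto_const_nhds hlim
    (Eventually.of_forall fun _ => zero_le) ?_
  filter_upwards [eventually_ne_atTop 0] with n hn
  exact eLpNorm_one_sqrt_mul_sampleCov_sub_le hn (by grind) (by grind)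
    (fun j => (hidentX j).memLp_iff.2 hfZ) (fun j => (hidentY j).memLp_iff.2 hgZ) (hX n) (hY n)

/-- For an iid sequence `(Z_j)_{j ≥ 1}` and a fixed lag `h ≥ 1`, the difference between
`√n C_n(s,t)` and the martingale-type sum
`n^{-1/2} ∑_{j=1}^{n-h} (e^{isZ_j} − φ_Z(s))(e^{itZ_{j+h}} − φ_Z(t))`
converges to `0` in probability. -/
theorem sqrt_n_Cn_approx
    {Ω : Type*} [MeasureSpace Ω] [IsProbabilityMeasure (ℙ : Measure Ω)]
    (Z : ℕ → Ω → ℝ) (hZmeas : ∀ j, Measurable (Z j))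
    (hindep : iIndepFun Z ℙ)
    (hident : ∀ j, Measure.map (Z j) (ℙ : Measure Ω) = Measure.map (Z 1) (ℙ : Measure Ω))
    (h : ℕ) (hh : 1 ≤ h) (s t : ℝ)
    (φZ : ℝ → ℂ)
    (hφZ : ∀ r : ℝ, φZ r = ∫ ω, Complex.exp (Complex.I * ((r * Z 1 ω : ℝ) : ℂ))
      ∂(ℙ : Measure Ω)) :
    TendstoInMeasure (ℙ : Measure Ω)
      (fun n : ℕ => fun ω : Ω =>
        ((Real.sqrt n : ℝ) : ℂ) *
          ((n : ℂ)⁻¹ * ∑ j ∈ Finset.Icc 1 (n - h),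
              Complex.exp (Complex.I * ((s * Z j ω + t * Z (j + h) ω : ℝ) : ℂ)) -
            ((n : ℂ)⁻¹ * ∑ j ∈ Finset.Icc 1 (n - h),
                Complex.exp (Complex.I * ((s * Z j ω : ℝ) : ℂ))) *
              ((n : ℂ)⁻¹ * ∑ j ∈ Finset.Icc 1 (n - h),
                Complex.exp (Complex.I * ((t * Z (j + h) ω : ℝ) : ℂ)))) -
          ((Real.sqrt n : ℝ) : ℂ)⁻¹ * ∑ j ∈ Finset.Icc 1 (n - h),
            (Complex.exp (Complex.I * ((s * Z j ω : ℝ) : ℂ)) - φZ s) *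
              (Complex.exp (Complex.I * ((t * Z (j + h) ω : ℝ) : ℂ)) - φZ t))
      atTop (fun _ => (0 : ℂ)) := by
  have hexp (r : ℝ) : Measurable fun x : ℝ => exp (I * ((r * x : ℝ) : ℂ)) := by fun_prop
  have hL2 (r : ℝ) : MemLp (fun ω => exp (I * ((r * Z 1 ω : ℝ) : ℂ))) 2 ℙ :=
    memLp_exp_I_mul_ofReal ((hZmeas 1).const_mul r).aemeasurable 2
  have hL1 := sqrt_n_Cn_approx_general (fun i j hij => hindep.indepFun hij)
    (fun j => ⟨(hZmeas j).aemeasurable, (hZmeas 1).aemeasurable, hident j⟩)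
    (hexp s) (hexp t) (hL2 s) (hL2 t) h
  refine tendstoInMeasure_of_tendsto_eLpNorm one_ne_zero
    (fun n => Measurable.aestronglyMeasurable (by fun_prop)) aestronglyMeasurable_const ?_
  simpa [sampleCov, Pi.sub_def, hφZ, mul_add, exp_add] using hL1
end
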